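/- For all n ≥ 0, A_{2n+1}(p,−1) = ((p−1)/2)^n · E_{2n+1}, where A_m(p,q) is the refined Eulerian polynomial and E_m is the Euler number. -/

import Mathlib

open Finset

/-- The set of (0-based) descent indices of a permutation of `Fin n`:
`i` is a descent index if `π i > π (i+1)` (so the 1-based descent position is `i+1`). -/
def descentSet {n : ℕ} (π : Equiv.Perm (Fin n)) : Finset ℕ :=
  (Finset.range n).filter
    (fun i => ∃ h : i + 1 < n, π ⟨i + 1, h⟩ < π ⟨i, Nat.lt_of_succ_lt h⟩)

/-- The number of descents of `π`. -/
def des {n : ℕ} (π : Equiv.Perm (Fin n)) : ℕ := (descentSet π).card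

/-- The number of descents of `π` at odd (1-based) positions, i.e. even 0-based indices. -/
def odes {n : ℕ} (π : Equiv.Perm (Fin n)) : ℕ :=
  ((descentSet π).filter (fun i => Even i)).card

/-- The number of descents of `π` at even (1-based) positions, i.e. odd 0-based indices. -/
def edes {n : ℕ} (π : Equiv.Perm (Fin n)) : ℕ :=
  ((descentSet π).filter (fun i => Odd i)).card

/-- The refined Eulerian polynomial `A_n(p,q) = Σ_π p^{odes π} q^{edes π}`. -/
def refinedEulerian (n : ℕ) (p q : ℝ) : ℝ :=
  ∑ π : Equiv.Perm (Fin n), p ^ odes π * q ^ edes π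

/-- The Eulerian polynomial `A_n(q) = Σ_π q^{des π}` as a function. -/
def eulerianEval (n : ℕ) (q : ℝ) : ℝ :=
  ∑ π : Equiv.Perm (Fin n), q ^ des π

/-- The Eulerian polynomial `A_n(q)` as a polynomial. -/
noncomputable def eulerianPolynomial (n : ℕ) : Polynomial ℝ :=
  ∑ π : Equiv.Perm (Fin n), Polynomial.X ^ des π

/-- The Eulerian number `A_{n,k}`: the number of permutations of `[n]` with `k` descents. -/
def eulerianNumber (n k : ℕ) : ℕ :=
  (Finset.univ.filter (fun π : Equiv.Perm (Fin n) => des π = k)).card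

/-- A permutation `a_1 a_2 … a_n` is alternating if `a_1 > a_2 < a_3 > ⋯`. -/
def IsAlternating {n : ℕ} (π : Equiv.Perm (Fin n)) : Prop :=
  ∀ i : ℕ, ∀ h : i + 1 < n,
    (π ⟨i + 1, h⟩ < π ⟨i, Nat.lt_of_succ_lt h⟩ ↔ Even i)

open scoped Classical in
/-- The Euler number `E_n`: the number of alternating permutations of `[n]`. -/
noncomputable def eulerNumber (n : ℕ) : ℕ :=
  (Finset.univ.filter (fun π : Equiv.Perm (Fin n) => IsAlternating π)).card

/-- `a_{n,k}`: the number of permutations of `[n]` with `k` even descents and no odd descents. -/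
def aNum (n k : ℕ) : ℕ :=
  (Finset.univ.filter (fun π : Equiv.Perm (Fin n) => edes π = k ∧ odes π = 0)).card

/-!
Draw the letters of a word independently and uniformly from `[0, 1]` and weight the word by a factor
for each descent and each ascent. Appending a letter acts on the weighted density `f` of the last
letter by `T f x = a * ∫ t in 0..x, f t + d * ∫ t in x..1, f t`, so a weighted sum over the
permutations of `[m]` is `m!` times the integral over `[0, 1]` of a product of such operators
applied to `1`.

Let `S` be the operator with `d = -1`, `a = 1`. It exchanges the functions that are even and odd
under `x ↦ 1 - x`, so `S ^ k 1` has integral zero for odd `k`. Every `T` is `(a - d) / 2 * S` plus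
an operator with constant values. In `(S T) ^ n 1` the constants contribute nothing to the integral,
which is therefore `((a - d) / 2) ^ n` times that of `S ^ (2 n) 1`.

For alternating permutations the two operators are `f ↦ ∫ t in x..1, f t` and
`f ↦ ∫ t in 0..x, f t`. Since `S ^ k 1` is even or odd about `1 / 2`, the substitution `x ↦ x / 2`
turns `S` into one or the other of them up to sign. This identifies the Euler number
`E_{2n+1}` with `(-1) ^ n * (2 n + 1)!` times the integral of `S ^ (2 n) 1`.
-/

section Permutations

variable {M : Type*} {n : ℕ}

/-- The permutation in one-line notation ending in `j` whose other letters are in the same relative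
order as those of `σ`. -/
def snocPerm (j : Fin (n + 1)) (σ : Equiv.Perm (Fin n)) : Equiv.Perm (Fin (n + 1)) :=
  finSuccEquivLast.trans ((Equiv.optionCongr σ).trans (finSuccEquiv' j).symm)

@[simp]
lemma snocPerm_last (j : Fin (n + 1)) (σ : Equiv.Perm (Fin n)) :
    snocPerm j σ (Fin.last n) = j := by
  simp [snocPerm]

@[simp]
lemma snocPerm_castSucc (j : Fin (n + 1)) (σ : Equiv.Perm (Fin n)) (i : Fin n) :
    snocPerm j σ i.castSucc = j.succAbove (σ i) := by
  simp [snocPerm]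

lemma bijective_snocPerm :
    Function.Bijective fun x : Fin (n + 1) × Equiv.Perm (Fin n) => snocPerm x.1 x.2 := by
  rw [Fintype.bijective_iff_injective_and_card]
  refine ⟨?_, by simp [Fintype.card_perm, Nat.factorial_succ]⟩
  rintro ⟨j, σ⟩ ⟨k, τ⟩ h
  obtain rfl : j = k := by simpa using congrArg (fun π => π (Fin.last n)) h
  have hστ : σ = τ := Equiv.ext fun i => by simpa using congrArg (fun π => π i.castSucc) h
  rw [hστ]

/-- The weight of a permutation: the product over the positions `i` of `d i` if `i` is a descent
and of `a i` if it is an ascent. -/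
def descentWeight [CommMonoid M] (d a : ℕ → M) (π : Equiv.Perm (Fin (n + 1))) : M :=
  ∏ i : Fin n, if π i.succ < π i.castSucc then d i else a i

lemma descentWeight_snocPerm [CommMonoid M] (d a : ℕ → M) (j : Fin (n + 2))
    (σ : Equiv.Perm (Fin (n + 1))) :
    descentWeight d a (snocPerm j σ) =
      descentWeight d a σ * if (j : ℕ) ≤ σ (Fin.last n) then d n else a n := by
  simp only [descentWeight, Fin.prod_univ_castSucc, ← Fin.castSucc_succ, Fin.succ_last,
    snocPerm_last, snocPerm_castSucc, Fin.succAbove_lt_succAbove_iff,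
    Fin.lt_succAbove_iff_le_castSucc, Fin.le_def, Fin.val_castSucc, Fin.val_last]

lemma mem_descentSet {π : Equiv.Perm (Fin (n + 1))} {i : Fin n} :
    (i : ℕ) ∈ descentSet π ↔ π i.succ < π i.castSucc := by
  simp only [descentSet, Finset.mem_filter, Finset.mem_range]
  exact ⟨fun ⟨_, _, h⟩ => h, fun h => ⟨by omega, by omega, h⟩⟩

lemma descentSet_subset_range (π : Equiv.Perm (Fin (n + 1))) : descentSet π ⊆ range n := by
  intro i hi
  obtain ⟨-, h, -⟩ := Finset.mem_filter.1 hi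
  exact Finset.mem_range.2 (by omega)

lemma prod_descentSet [CommMonoid M] (d : ℕ → M) (π : Equiv.Perm (Fin (n + 1))) :
    ∏ i ∈ descentSet π, d i = descentWeight d 1 π := by
  rw [← Finset.inter_eq_right.2 (descentSet_subset_range π), ← Finset.prod_ite_mem,
    ← Fin.prod_univ_eq_prod_range (fun i => if i ∈ descentSet π then d i else 1)]
  simp only [mem_descentSet, descentWeight, Pi.one_apply]

lemma pow_odes_mul_pow_edes [CommMonoid M] (p q : M) (π : Equiv.Perm (Fin (n + 1))) :
    p ^ odes π * q ^ edes π = descentWeight (fun i => if Even i then p else q) 1 π := by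
  rw [← prod_descentSet, Finset.prod_ite, Finset.prod_const, Finset.prod_const]
  simp only [odes, edes, Nat.not_even_iff_odd]

lemma isAlternating_iff (π : Equiv.Perm (Fin (n + 1))) :
    IsAlternating π ↔ ∀ i : Fin n, π i.succ < π i.castSucc ↔ Even (i : ℕ) :=
  ⟨fun h i => h i (by omega), fun h i hi => h ⟨i, by omega⟩⟩

open scoped Classical in
lemma ite_isAlternating [CommMonoidWithZero M] (π : Equiv.Perm (Fin (n + 1))) :
    (if IsAlternating π then (1 : M) else 0) =
      descentWeight (fun i => if Even i then 1 else 0) (fun i => if Even i then 0 else 1) π := by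
  have hfactor (i : Fin n) :
      (if π i.succ < π i.castSucc then (if Even (i : ℕ) then (1 : M) else 0)
        else if Even (i : ℕ) then 0 else 1) =
      if π i.succ < π i.castSucc ↔ Even (i : ℕ) then 1 else 0 := by
    split_ifs <;> tauto
  simp only [descentWeight, hfactor, Finset.prod_boole, Finset.mem_univ, true_imp_iff,
    isAlternating_iff]

end Permutations

section Transfer

/-- The operator `f ↦ (x ↦ ∫ t in 0..x, f t)`; its value at `1` is the integral over `[0, 1]`. -/
noncomputable def primitiveLM : C(ℝ, ℝ) →ₗ[ℝ] C(ℝ, ℝ) where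
  toFun f :=
    ⟨fun x => ∫ t in (0 : ℝ)..x, f t,
      intervalIntegral.continuous_primitive (fun _ _ => f.continuous.intervalIntegrable _ _) 0⟩
  map_add' f g := ContinuousMap.ext fun _ => intervalIntegral.integral_add
    (f.continuous.intervalIntegrable _ _) (g.continuous.intervalIntegrable _ _)
  map_smul' c f := ContinuousMap.ext fun _ => intervalIntegral.integral_const_mul c f

lemma primitiveLM_apply (f : C(ℝ, ℝ)) (x : ℝ) : primitiveLM f x = ∫ t in (0 : ℝ)..x, f t :=
  rfl

@[simp]
lemma primitiveLM_apply_zero (f : C(ℝ, ℝ)) : primitiveLM f 0 = 0 :=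
  intervalIntegral.integral_same

/-- The operator taking `f` to `x ↦ a * ∫ t in 0..x, f t + d * ∫ t in x..1, f t`. If `f` is the
density of the last letter of a random word in `[0, 1]`, then `transfer d a f` is the density after
one more uniform letter is appended, a descent being weighted by `d` and an ascent by `a`. -/
noncomputable def transfer (d a : ℝ) : Module.End ℝ C(ℝ, ℝ) where
  toFun f := a • primitiveLM f + d • (primitiveLM f 1 • 1 - primitiveLM f)
  map_add' f g := by
    ext x
    simp only [map_add, ContinuousMap.add_apply, ContinuousMap.sub_apply, ContinuousMap.smul_apply,
      ContinuousMap.one_apply, smul_eq_mul]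
    ring
  map_smul' c f := by
    ext x
    simp only [map_smul, RingHom.id_apply, ContinuousMap.add_apply, ContinuousMap.sub_apply,
      ContinuousMap.smul_apply, ContinuousMap.one_apply, smul_eq_mul]
    ring

lemma transfer_apply (d a : ℝ) (f : C(ℝ, ℝ)) (x : ℝ) :
    transfer d a f x = a * primitiveLM f x + d * (primitiveLM f 1 - primitiveLM f x) := by
  simp [transfer]

lemma transfer_eq_smul_one_add_smul_transfer (d a : ℝ) (f : C(ℝ, ℝ)) :
    transfer d a f =
      ((a + d) / 2 * primitiveLM f 1) • 1 + ((a - d) / 2) • transfer (-1) 1 f := by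
  ext x
  simp only [transfer_apply, ContinuousMap.add_apply, ContinuousMap.smul_apply,
    ContinuousMap.one_apply, smul_eq_mul]
  ring

end Transfer

section Bernstein

open Polynomial

lemma derivative_sum_Ico_bernsteinPolynomial (R : Type*) [CommRing R] {n i : ℕ} (hi : i ≤ n) :
    derivative (∑ j ∈ Ico (i + 1) (n + 2), bernsteinPolynomial R (n + 1) j) =
      (n + 1) * bernsteinPolynomial R n i := by
  have htelescope := Finset.sum_Ico_sub (f := bernsteinPolynomial R n) (Nat.le_succ_of_le hi)
  rw [bernsteinPolynomial.eq_zero_of_lt R n.lt_succ_self, zero_sub] at htelescope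
  rw [← Finset.sum_Ico_add' _ i (n + 1) 1, derivative_sum, ← neg_eq_iff_eq_neg.2 htelescope,
    ← Finset.sum_neg_distrib, Finset.mul_sum]
  refine Finset.sum_congr rfl fun j _ => ?_
  rw [bernsteinPolynomial.derivative_succ, neg_sub, Nat.add_sub_cancel, Nat.cast_succ]

lemma primitiveLM_bernsteinPolynomial {n i : ℕ} (hi : i ≤ n) (x : ℝ) :
    (n + 1) * primitiveLM (bernsteinPolynomial ℝ n i).toContinuousMap x =
      ∑ j ∈ Ico (i + 1) (n + 2), (bernsteinPolynomial ℝ (n + 1) j).eval x := by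
  set F := ∑ j ∈ Ico (i + 1) (n + 2), bernsteinPolynomial ℝ (n + 1) j with hF
  have hderiv (t : ℝ) : HasDerivAt F.eval ((n + 1) * (bernsteinPolynomial ℝ n i).eval t) t := by
    have h := F.hasDerivAt t
    rw [hF, derivative_sum_Ico_bernsteinPolynomial ℝ hi, ← hF] at h
    simpa using h
  have hzero : F.eval 0 = 0 := by
    rw [hF, eval_finsetSum]
    refine Finset.sum_eq_zero fun j hj => ?_
    rw [bernsteinPolynomial.eval_at_0, if_neg (by have := Finset.mem_Ico.1 hj; omega)]
  have hftc := intervalIntegral.integral_eq_sub_of_hasDerivAt (a := 0) (b := x)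
    (fun t _ => hderiv t) (Continuous.intervalIntegrable (by fun_prop) _ _)
  rw [intervalIntegral.integral_const_mul, hzero, sub_zero] at hftc
  rw [← eval_finsetSum, ← hF, ← hftc, primitiveLM_apply]
  rfl

lemma primitiveLM_bernsteinPolynomial_one {n i : ℕ} (hi : i ≤ n) :
    (n + 1) * primitiveLM (bernsteinPolynomial ℝ n i).toContinuousMap 1 = 1 := by
  rw [primitiveLM_bernsteinPolynomial hi]
  simp [bernsteinPolynomial.eval_at_1, hi]

lemma transfer_bernsteinPolynomial (d a : ℝ) {n i : ℕ} (hi : i ≤ n) :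
    ((n : ℝ) + 1) • transfer d a (bernsteinPolynomial ℝ n i).toContinuousMap =
      ∑ j ∈ range (n + 2),
        (if j ≤ i then d else a) • (bernsteinPolynomial ℝ (n + 1) j).toContinuousMap := by
  ext x
  set b : ℕ → ℝ := fun j => (bernsteinPolynomial ℝ (n + 1) j).eval x with hb
  have hsum : ∑ j ∈ range (i + 1), b j + ∑ j ∈ Ico (i + 1) (n + 2), b j = 1 := by
    rw [Finset.sum_range_add_sum_Ico b (by omega), hb, ← eval_finsetSum, bernsteinPolynomial.sum,
      eval_one]
  have hdescent : ∑ j ∈ range (i + 1), (if j ≤ i then d else a) * b j =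
      d * ∑ j ∈ range (i + 1), b j := by
    rw [Finset.mul_sum]
    exact Finset.sum_congr rfl fun j hj => by rw [if_pos (Finset.mem_range_succ_iff.1 hj)]
  have hascent : ∑ j ∈ Ico (i + 1) (n + 2), (if j ≤ i then d else a) * b j =
      a * ∑ j ∈ Ico (i + 1) (n + 2), b j := by
    rw [Finset.mul_sum]
    exact Finset.sum_congr rfl fun j hj => by
      rw [if_neg (by have := Finset.mem_Ico.1 hj; omega)]
  simp only [ContinuousMap.smul_apply, ContinuousMap.coe_sum, Finset.sum_apply, smul_eq_mul,
    toContinuousMap_apply, transfer_apply]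
  rw [← Finset.sum_range_add_sum_Ico _ (show i + 1 ≤ n + 2 by omega), hdescent, hascent]
  linear_combination (a - d) * primitiveLM_bernsteinPolynomial hi x +
    d * primitiveLM_bernsteinPolynomial_one hi - d * hsum

end Bernstein

section Density

open scoped Nat

/-- The density of the last of `n + 1` independent uniform letters in `[0, 1]`, each word being
weighted like its relative order in `descentWeight`. -/
noncomputable def descentDensity (d a : ℕ → ℝ) : ℕ → C(ℝ, ℝ)
  | 0 => 1
  | n + 1 => transfer (d n) (a n) (descentDensity d a n)

/-- The polynomial `bernsteinPolynomial ℝ n j` is the probability that exactly `j` of `n` uniform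
letters are smaller than `x`, that is, that a last letter `x` has rank `j`. -/
lemma sum_descentWeight_smul_bernsteinPolynomial (d a : ℕ → ℝ) (n : ℕ) :
    ∑ π : Equiv.Perm (Fin (n + 1)),
        descentWeight d a π • (bernsteinPolynomial ℝ n (π (Fin.last n))).toContinuousMap =
      (n ! : ℝ) • descentDensity d a n := by
  induction n with
  | zero =>
    ext x
    simp [descentWeight, descentDensity, bernsteinPolynomial]
  | succ n ih =>
    rw [descentDensity, Nat.factorial_succ, Nat.cast_mul, mul_smul, ← map_smul, ← ih, map_sum,
      Finset.smul_sum, ← bijective_snocPerm.sum_comp, Fintype.sum_prod_type_right]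
    refine Finset.sum_congr rfl fun σ _ => ?_
    rw [map_smul, smul_comm, Nat.cast_succ,
      transfer_bernsteinPolynomial _ _ (Fin.is_le (σ (Fin.last n))), Finset.smul_sum,
      ← Fin.sum_univ_eq_sum_range (fun j => descentWeight d a σ •
        (if j ≤ σ (Fin.last n) then d n else a n) •
          (bernsteinPolynomial ℝ (n + 1) j).toContinuousMap)]
    simp only [descentWeight_snocPerm, snocPerm_last, mul_smul]

lemma sum_descentWeight (d a : ℕ → ℝ) (n : ℕ) :
    ∑ π : Equiv.Perm (Fin (n + 1)), descentWeight d a π =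
      (n + 1)! * primitiveLM (descentDensity d a n) 1 := by
  have h := congrArg (fun f => (n + 1) * primitiveLM f 1)
    (sum_descentWeight_smul_bernsteinPolynomial d a n)
  simp only [map_sum, map_smul, ContinuousMap.coe_sum, Finset.sum_apply, ContinuousMap.smul_apply,
    smul_eq_mul, Finset.mul_sum, mul_left_comm ((n : ℝ) + 1),
    primitiveLM_bernsteinPolynomial_one (Fin.is_le _), mul_one] at h
  rw [h, Nat.factorial_succ]
  push_cast
  ring

lemma descentDensity_two_mul (d d' a a' : ℝ) (n : ℕ) :
    descentDensity (fun i => if Even i then d else d') (fun i => if Even i then a else a') (2 * n) =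
      ((transfer d' a' * transfer d a) ^ n) 1 := by
  induction n with
  | zero => rfl
  | succ n ih =>
    have hodd : ¬ Even (2 * n + 1) := by simp
    rw [show 2 * (n + 1) = 2 * n + 1 + 1 by ring, descentDensity, descentDensity, if_neg hodd,
      if_neg hodd, if_pos (even_two_mul n), if_pos (even_two_mul n), ih, pow_succ',
      Module.End.mul_apply, Module.End.mul_apply]

lemma refinedEulerian_two_mul_add_one (n : ℕ) (p q : ℝ) :
    refinedEulerian (2 * n + 1) p q =
      (2 * n + 1)! * primitiveLM (((transfer q 1 * transfer p 1) ^ n) 1) 1 := by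
  simp only [refinedEulerian, pow_odes_mul_pow_edes, sum_descentWeight, ← descentDensity_two_mul,
    ite_self, Pi.one_def]

lemma eulerNumber_two_mul_add_one (n : ℕ) :
    (eulerNumber (2 * n + 1) : ℝ) =
      (2 * n + 1)! * primitiveLM (((transfer 0 1 * transfer 1 0) ^ n) 1) 1 := by
  rw [eulerNumber, ← Finset.sum_boole, ← descentDensity_two_mul, ← sum_descentWeight]
  exact Finset.sum_congr rfl fun π _ => ite_isAlternating π

end Density

section Reflection

variable {f : C(ℝ, ℝ)} {ε : ℝ}

lemma primitiveLM_one_sub (hf : ∀ x, f (1 - x) = ε * f x) (x : ℝ) :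
    primitiveLM f (1 - x) = ε * (primitiveLM f 1 - primitiveLM f x) := by
  have hsub := intervalIntegral.integral_comp_sub_left (a := x) (b := 1) f 1
  simp only [hf, sub_self, intervalIntegral.integral_const_mul] at hsub
  simp only [primitiveLM_apply]
  rw [← hsub, intervalIntegral.integral_interval_sub_left (f.continuous.intervalIntegrable _ _)
    (f.continuous.intervalIntegrable _ _)]

lemma primitiveLM_one_eq_mul (hf : ∀ x, f (1 - x) = ε * f x) :
    primitiveLM f 1 = ε * primitiveLM f 1 := by
  simpa using primitiveLM_one_sub hf 0

lemma primitiveLM_one_eq_zero_of_one_sub_eq_neg (hf : ∀ x, f (1 - x) = -f x) :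
    primitiveLM f 1 = 0 := by
  have h := primitiveLM_one_eq_mul (ε := -1) (by simpa using hf)
  linarith

lemma transfer_neg_one_one_one_sub (hf : ∀ x, f (1 - x) = ε * f x) (x : ℝ) :
    transfer (-1) 1 f (1 - x) = -ε * transfer (-1) 1 f x := by
  rw [transfer_apply, transfer_apply, primitiveLM_one_sub hf]
  linear_combination -primitiveLM_one_eq_mul hf

lemma transfer_neg_one_one_pow_one_sub (k : ℕ) (x : ℝ) :
    (transfer (-1) 1 ^ k) 1 (1 - x) = (-1) ^ k * (transfer (-1) 1 ^ k) 1 x := by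
  induction k generalizing x with
  | zero => simp
  | succ k ih =>
    rw [pow_succ', Module.End.mul_apply, transfer_neg_one_one_one_sub ih, pow_succ', neg_one_mul]

lemma primitiveLM_transfer_neg_one_one_pow_one {k : ℕ} (hk : Odd k) :
    primitiveLM ((transfer (-1) 1 ^ k) 1) 1 = 0 :=
  primitiveLM_one_eq_zero_of_one_sub_eq_neg fun x => by
    rw [transfer_neg_one_one_pow_one_sub, hk.neg_one_pow, neg_one_mul]

/-- Expand every `transfer d a` into a constant and a multiple of `transfer (-1) 1`: after the last
constant an odd number of operators `transfer (-1) 1` follows, so those terms integrate to zero. -/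
lemma primitiveLM_transfer_neg_one_one_mul_transfer_pow (d a : ℝ) (k r : ℕ) :
    primitiveLM ((transfer (-1) 1 ^ (2 * r)) (((transfer (-1) 1 * transfer d a) ^ k) 1)) 1 =
      ((a - d) / 2) ^ k * primitiveLM ((transfer (-1) 1 ^ (2 * (k + r))) 1) 1 := by
  induction k generalizing r with
  | zero => simp
  | succ k ih =>
    set f := ((transfer (-1) 1 * transfer d a) ^ k) 1
    have hsplit : (transfer (-1) 1 ^ (2 * r)) (((transfer (-1) 1 * transfer d a) ^ (k + 1)) 1) =
        ((a + d) / 2 * primitiveLM f 1) • (transfer (-1) 1 ^ (2 * r + 1)) 1 +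
          ((a - d) / 2) • (transfer (-1) 1 ^ (2 * (r + 1))) f := by
      rw [pow_succ', Module.End.mul_apply, Module.End.mul_apply,
        transfer_eq_smul_one_add_smul_transfer d a]
      simp only [map_add, map_smul, mul_add, pow_succ, Module.End.mul_apply, mul_one]
      rfl
    rw [hsplit, map_add, map_smul, map_smul, ContinuousMap.add_apply, ContinuousMap.smul_apply,
      ContinuousMap.smul_apply, ih,
      primitiveLM_transfer_neg_one_one_pow_one (odd_two_mul_add_one r), smul_eq_mul, smul_eq_mul,
      show k + (r + 1) = k + 1 + r by ring]
    ring

end Reflection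

section Halving

/-- The operator `f ↦ (x ↦ f (x / 2))`. -/
noncomputable def halve : C(ℝ, ℝ) →ₐ[ℝ] C(ℝ, ℝ) :=
  ContinuousMap.compRightAlgHom ℝ ℝ ⟨fun x => x / 2, by fun_prop⟩

@[simp]
lemma halve_apply (f : C(ℝ, ℝ)) (x : ℝ) : halve f x = f (x / 2) :=
  rfl

lemma primitiveLM_halve (f : C(ℝ, ℝ)) (x : ℝ) :
    primitiveLM (halve f) x = 2 * primitiveLM f (x / 2) := by
  simp [primitiveLM_apply, intervalIntegral.integral_comp_div]

variable {f : C(ℝ, ℝ)}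

lemma two_mul_primitiveLM_half (hf : ∀ x, f (1 - x) = f x) :
    2 * primitiveLM f (1 / 2) = primitiveLM f 1 := by
  have h := primitiveLM_one_sub (ε := 1) (by simpa using hf) (1 / 2)
  norm_num at h ⊢
  linarith

lemma primitiveLM_halve_one (hf : ∀ x, f (1 - x) = f x) :
    primitiveLM (halve f) 1 = primitiveLM f 1 := by
  rw [primitiveLM_halve, two_mul_primitiveLM_half hf]

lemma transfer_one_zero_halve (hf : ∀ x, f (1 - x) = f x) :
    transfer 1 0 (halve f) = -halve (transfer (-1) 1 f) := by
  ext x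
  rw [ContinuousMap.neg_apply, halve_apply, transfer_apply, transfer_apply,
    primitiveLM_halve_one hf, primitiveLM_halve]
  ring

lemma transfer_zero_one_halve (hf : ∀ x, f (1 - x) = -f x) :
    transfer 0 1 (halve f) = halve (transfer (-1) 1 f) := by
  ext x
  rw [halve_apply, transfer_apply, transfer_apply, primitiveLM_halve,
    primitiveLM_one_eq_zero_of_one_sub_eq_neg hf]
  ring

lemma transfer_zero_one_mul_transfer_one_zero_pow_one (n : ℕ) :
    ((transfer 0 1 * transfer 1 0) ^ n) 1 =
      (-1 : ℝ) ^ n • halve ((transfer (-1) 1 ^ (2 * n)) 1) := by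
  induction n with
  | zero => simp
  | succ n ih =>
    have heven (x : ℝ) :
        (transfer (-1) 1 ^ (2 * n)) 1 (1 - x) = (transfer (-1) 1 ^ (2 * n)) 1 x := by
      simpa using transfer_neg_one_one_pow_one_sub (2 * n) x
    have hodd (x : ℝ) : transfer (-1) 1 ((transfer (-1) 1 ^ (2 * n)) 1) (1 - x) =
        -transfer (-1) 1 ((transfer (-1) 1 ^ (2 * n)) 1) x := by
      simpa using transfer_neg_one_one_one_sub (ε := 1) (by simpa using heven) x
    rw [pow_succ', Module.End.mul_apply, ih, map_smul, Module.End.mul_apply,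
      transfer_one_zero_halve heven, map_neg, transfer_zero_one_halve hodd,
      show 2 * (n + 1) = 2 * n + 1 + 1 by ring, pow_succ' _ (2 * n + 1), pow_succ' _ (2 * n),
      pow_succ, mul_neg_one, neg_smul, smul_neg]
    rfl

lemma primitiveLM_transfer_zero_one_mul_transfer_one_zero_pow_one (n : ℕ) :
    primitiveLM (((transfer 0 1 * transfer 1 0) ^ n) 1) 1 =
      (-1) ^ n * primitiveLM ((transfer (-1) 1 ^ (2 * n)) 1) 1 := by
  rw [transfer_zero_one_mul_transfer_one_zero_pow_one, map_smul, ContinuousMap.smul_apply,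
    smul_eq_mul, primitiveLM_halve_one]
  simpa using transfer_neg_one_one_pow_one_sub (2 * n)

end Halving

/-- A_{2n+1}(p,−1) = ((p−1)/2)^n E_{2n+1}. -/
theorem refinedEulerian_odd_at_neg_one (n : ℕ) (p : ℝ) :
    refinedEulerian (2 * n + 1) p (-1) = ((p - 1) / 2) ^ n * (eulerNumber (2 * n + 1) : ℝ) := by
  have hrefined : primitiveLM (((transfer (-1) 1 * transfer p 1) ^ n) 1) 1 =
      ((1 - p) / 2) ^ n * primitiveLM ((transfer (-1) 1 ^ (2 * n)) 1) 1 :=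
    primitiveLM_transfer_neg_one_one_mul_transfer_pow p 1 n 0
  rw [refinedEulerian_two_mul_add_one, eulerNumber_two_mul_add_one, hrefined,
    primitiveLM_transfer_zero_one_mul_transfer_one_zero_pow_one,
    show (1 - p) / 2 = (p - 1) / 2 * -1 by ring, mul_pow]
  ring
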